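/- Let γ ∈ [0, π/2) and C > 0. Then for every φ ∈ [0, π/2], the second derivative of the dimensionless total force is nonnegative: F″(φ) = (C/2)·(cos(γ/2)·sin(φ/2) − sin(γ/2)·cos(φ/2) + 9·cos(γ/2)·sin(3φ/2) + 9·sin(γ/2)·cos(3φ/2)) + 2·C²·sin(2φ) + 2·sin(φ + γ) ≥ 0, and equality holds only when φ = 0 and γ = 0. -/

import Mathlib

/-!
Put `ψ = (φ + γ) / 2`. The second derivative of the total force is
`C (5 sin φ cos ψ + 4 cos φ sin ψ) + 4 C² sin φ cos φ + 4 sin ψ cos ψ`,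
and each term is nonnegative as soon as `φ` and `ψ` both lie in the first quadrant. Splitting off
`4 C sin (φ + ψ)` leaves nonnegative terms only, so a zero forces `φ + ψ ∈ {0, π}`, that is,
`φ = ψ = 0` or `φ = ψ = π / 2`; in the second case `γ = π / 2` is not acute.
-/

open Real

/-- The dimensionless total force `F(φ)`, with the parameters `γ`, `A`, `C` as explicit
arguments. -/
noncomputable def totalForce (γ A C φ : ℝ) : ℝ :=
  -A * C ^ 2 - 2 * sin (φ + γ) - 4 * C * cos ((φ + γ) / 2) * sin φ
    - (1 / 2) * C ^ 2 * sin (2 * φ) + C ^ 2 * φ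

/-- The closed form of `F″(φ)`, expanded in half-angles of `γ` as in the paper; the offset `A` of
the force does not enter. -/
noncomputable def totalForceSecondDeriv (γ C φ : ℝ) : ℝ :=
  (C / 2) * (cos (γ / 2) * sin (φ / 2) - sin (γ / 2) * cos (φ / 2)
      + 9 * cos (γ / 2) * sin (3 * φ / 2) + 9 * sin (γ / 2) * cos (3 * φ / 2))
    + 2 * C ^ 2 * sin (2 * φ) + 2 * sin (φ + γ)

lemma totalForceSecondDeriv_eq (γ C φ : ℝ) :
    totalForceSecondDeriv γ C φ =
      C * (5 * sin φ * cos ((φ + γ) / 2) + 4 * cos φ * sin ((φ + γ) / 2))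
        + 2 * C ^ 2 * sin (2 * φ) + 2 * sin (φ + γ) := by
  have sin_diff : cos (γ / 2) * sin (φ / 2) - sin (γ / 2) * cos (φ / 2) =
      sin φ * cos ((φ + γ) / 2) - cos φ * sin ((φ + γ) / 2) := by
    rw [← sin_sub, show φ - (φ + γ) / 2 = φ / 2 - γ / 2 by ring, sin_sub]
    ring
  have sin_sum : cos (γ / 2) * sin (3 * φ / 2) + sin (γ / 2) * cos (3 * φ / 2) =
      sin φ * cos ((φ + γ) / 2) + cos φ * sin ((φ + γ) / 2) := by
    rw [← sin_add, show φ + (φ + γ) / 2 = 3 * φ / 2 + γ / 2 by ring, sin_add]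
    ring
  rw [totalForceSecondDeriv]
  linear_combination (C / 2) * sin_diff + (9 * C / 2) * sin_sum

lemma deriv_totalForce (γ A C : ℝ) :
    deriv (totalForce γ A C) = fun φ =>
      -2 * cos (φ + γ)
        - 2 * C * (2 * cos ((φ + γ) / 2) * cos φ - sin ((φ + γ) / 2) * sin φ)
        - C ^ 2 * cos (2 * φ) + C ^ 2 := by
  funext φ
  have hadd : HasDerivAt (fun x => x + γ) 1 φ := (hasDerivAt_id φ).add_const γ
  have hdouble : HasDerivAt (fun x => 2 * x) 2 φ := hasDerivAt_const_mul 2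
  have hmixed := ((hadd.div_const 2).cos.const_mul (4 * C)).mul (hasDerivAt_sin φ)
  have hforce := (((hadd.sin.const_mul 2).const_sub (-A * C ^ 2)).sub hmixed).sub
    (hdouble.sin.const_mul ((1 / 2) * C ^ 2)) |>.add (hasDerivAt_const_mul (C ^ 2))
  exact (hforce.congr_deriv (by ring)).deriv

lemma deriv_deriv_totalForce (γ A C : ℝ) :
    deriv (deriv (totalForce γ A C)) = totalForceSecondDeriv γ C := by
  funext φ
  have hadd : HasDerivAt (fun x => x + γ) 1 φ := (hasDerivAt_id φ).add_const γ
  have hdouble : HasDerivAt (fun x => 2 * x) 2 φ := hasDerivAt_const_mul 2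
  have hhalf := hadd.div_const 2
  have hmixed := (((hhalf.cos.const_mul 2).mul (hasDerivAt_cos φ)).sub
    (hhalf.sin.mul (hasDerivAt_sin φ))).const_mul (2 * C)
  have hderiv := (((hadd.cos.const_mul (-2)).sub hmixed).sub
    (hdouble.cos.const_mul (C ^ 2))).add_const (C ^ 2)
  rw [deriv_totalForce, totalForceSecondDeriv_eq]
  exact (hderiv.congr_deriv (by ring)).deriv

section Positivity

variable {γ C φ : ℝ}

lemma four_mul_sin_le_totalForceSecondDeriv (hC : 0 ≤ C) (hφ : φ ∈ Set.Icc 0 (π / 2))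
    (hφγ : φ + γ ∈ Set.Icc 0 π) :
    4 * C * sin (φ + (φ + γ) / 2) ≤ totalForceSecondDeriv γ C φ := by
  obtain ⟨hφ_nonneg, hφ_le⟩ := hφ
  have hsin : 0 ≤ sin φ := sin_nonneg_of_nonneg_of_le_pi hφ_nonneg (by linarith)
  have hcos_half : 0 ≤ cos ((φ + γ) / 2) :=
    cos_nonneg_of_neg_pi_div_two_le_of_le (by linarith [hφγ.1, pi_pos]) (by linarith [hφγ.2])
  have hsin_double : 0 ≤ sin (2 * φ) :=
    sin_nonneg_of_nonneg_of_le_pi (by linarith) (by linarith)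
  have hsin_add : 0 ≤ sin (φ + γ) := sin_nonneg_of_mem_Icc hφγ
  have hremainder :
      0 ≤ C * (sin φ * cos ((φ + γ) / 2)) + 2 * C ^ 2 * sin (2 * φ) + 2 * sin (φ + γ) := by
    positivity
  rw [totalForceSecondDeriv_eq, sin_add φ]
  linarith

lemma totalForceSecondDeriv_nonneg (hC : 0 ≤ C) (hφ : φ ∈ Set.Icc 0 (π / 2))
    (hφγ : φ + γ ∈ Set.Icc 0 π) : 0 ≤ totalForceSecondDeriv γ C φ := by
  have hsin : 0 ≤ sin (φ + (φ + γ) / 2) :=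
    sin_nonneg_of_nonneg_of_le_pi (by linarith [hφ.1, hφγ.1]) (by linarith [hφ.2, hφγ.2])
  exact (by positivity : 0 ≤ 4 * C * sin (φ + (φ + γ) / 2)).trans
    (four_mul_sin_le_totalForceSecondDeriv hC hφ hφγ)

lemma totalForceSecondDeriv_eq_zero_iff (hC : 0 < C) (hφ : φ ∈ Set.Icc 0 (π / 2))
    (hφγ : φ + γ ∈ Set.Icc 0 π) :
    totalForceSecondDeriv γ C φ = 0 ↔ φ = 0 ∧ γ = 0 ∨ φ = π / 2 ∧ γ = π / 2 := by
  constructor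
  · intro hzero
    have hsin : sin (φ + (φ + γ) / 2) ≤ 0 := by
      have hle := four_mul_sin_le_totalForceSecondDeriv hC.le hφ hφγ
      rw [hzero] at hle
      exact nonpos_of_mul_nonpos_right hle (by positivity)
    obtain ⟨hφ_nonneg, hφ_le⟩ := hφ
    obtain ⟨hφγ_nonneg, hφγ_le⟩ := hφγ
    have hendpoint : φ + (φ + γ) / 2 ≤ 0 ∨ π ≤ φ + (φ + γ) / 2 := by
      by_contra! hinterior
      exact hsin.not_gt (sin_pos_of_pos_of_lt_pi hinterior.1 hinterior.2)
    rcases hendpoint with hle_zero | hpi_le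
    · exact .inl ⟨by linarith, by linarith⟩
    · exact .inr ⟨by linarith, by linarith⟩
  · rintro (⟨rfl, rfl⟩ | ⟨rfl, rfl⟩)
    · simp [totalForceSecondDeriv_eq]
    · simp [totalForceSecondDeriv_eq, mul_div_cancel₀]

end Positivity

theorem total_force_second_deriv_nonneg_acute_general {γ C φ : ℝ} (A : ℝ) (hC : 0 < C)
    (hφ : φ ∈ Set.Icc 0 (π / 2)) (hφγ : φ + γ ∈ Set.Icc 0 π) :
    deriv (deriv (totalForce γ A C)) φ = totalForceSecondDeriv γ C φ ∧
      0 ≤ totalForceSecondDeriv γ C φ ∧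
      (totalForceSecondDeriv γ C φ = 0 ↔ φ = 0 ∧ γ = 0 ∨ φ = π / 2 ∧ γ = π / 2) :=
  ⟨congrFun (deriv_deriv_totalForce γ A C) φ, totalForceSecondDeriv_nonneg hC.le hφ hφγ,
    totalForceSecondDeriv_eq_zero_iff hC hφ hφγ⟩

/-- For `γ ∈ [0, π/2)` and `C > 0`, the second derivative of the dimensionless total force is
nonnegative on `[0, π/2]`, with equality only when `φ = 0` and `γ = 0`. -/
theorem total_force_second_deriv_nonneg_acute (γ A C : ℝ)
    (hγ : γ ∈ Set.Ico (0 : ℝ) (Real.pi / 2)) (hA : 0 < A) (hC : 0 < C)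
    (F : ℝ → ℝ)
    (hF : F = fun φ => -A * C ^ 2 - 2 * Real.sin (φ + γ)
      - 4 * C * Real.cos ((φ + γ) / 2) * Real.sin φ
      - (1 / 2) * C ^ 2 * Real.sin (2 * φ) + C ^ 2 * φ) :
    ∀ φ ∈ Set.Icc (0 : ℝ) (Real.pi / 2),
      deriv (deriv F) φ =
        (C / 2) * (Real.cos (γ / 2) * Real.sin (φ / 2) - Real.sin (γ / 2) * Real.cos (φ / 2)
          + 9 * Real.cos (γ / 2) * Real.sin (3 * φ / 2)
          + 9 * Real.sin (γ / 2) * Real.cos (3 * φ / 2))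
        + 2 * C ^ 2 * Real.sin (2 * φ) + 2 * Real.sin (φ + γ) ∧
      0 ≤ (C / 2) * (Real.cos (γ / 2) * Real.sin (φ / 2) - Real.sin (γ / 2) * Real.cos (φ / 2)
          + 9 * Real.cos (γ / 2) * Real.sin (3 * φ / 2)
          + 9 * Real.sin (γ / 2) * Real.cos (3 * φ / 2))
        + 2 * C ^ 2 * Real.sin (2 * φ) + 2 * Real.sin (φ + γ) ∧
      ((C / 2) * (Real.cos (γ / 2) * Real.sin (φ / 2) - Real.sin (γ / 2) * Real.cos (φ / 2)
          + 9 * Real.cos (γ / 2) * Real.sin (3 * φ / 2)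
          + 9 * Real.sin (γ / 2) * Real.cos (3 * φ / 2))
        + 2 * C ^ 2 * Real.sin (2 * φ) + 2 * Real.sin (φ + γ) = 0 → φ = 0 ∧ γ = 0) := by
  subst hF
  intro φ hφ
  obtain ⟨hderiv, hnonneg, hzero⟩ := total_force_second_deriv_nonneg_acute_general A hC hφ
    ⟨add_nonneg hφ.1 hγ.1, by linarith [hφ.2, hγ.2]⟩
  exact ⟨hderiv, hnonneg, fun h => (hzero.1 h).resolve_right fun hright => hγ.2.ne hright.2⟩
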